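/- arXiv:1010.5024 — 2 statements merged into one kernel-verified Lean document; each statement's English description precedes it below -/
import Mathlib

section
/- Let T > 0 and ν > 0. Let u : ℝ² × [0,T] → ℝ², θ : ℝ² × [0,T] → ℝ, and p : ℝ² × [0,T] → ℝ be smooth functions, ℤ²-periodic in x, such that for every t the field u(·,t) is divergence-free, and pointwise on ℝ² × [0,T]: ∂_t u + (u·∇)u = ν Δu − ∇p + θ e₂ and ∂_t θ + u·∇θ = 0, where e₂ = (0,1). Then for every t ∈ [0,T]: ‖∇u(t)‖_{L²}² + ν ∫₀ᵗ ‖Δu(s)‖_{L²}² ds ≤ ‖∇u(0)‖_{L²}² + (t/ν) ‖θ(0)‖_{L²}², where all norms are over Q = [0,1]². -/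
/-!
Testing the momentum equation with `-Δu` gives `d/dt ‖∇u‖² = -2 ∫ Δu · ∂ₜu`. The pressure does not
contribute, because `Δ` is symmetric and commutes with `∂ᵢ`, so that `∫ Δu · ∇p = ∫ u · ∇Δp = 0` for
divergence-free `u`. Neither does the inertial term: integration by parts turns `∫ Δu · (u·∇)u` into
minus the integral of `∑ ∂ₖuᵢ ∂ₖuⱼ ∂ⱼuᵢ = tr (A² Aᵀ)` with `A = ∇u`, and a trace-free `2 × 2` matrix
has `A² = -(det A) 1`, hence `tr (A² Aᵀ) = 0`. Young's inequality for the force `θ e₂` leaves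
`d/dt ‖∇u‖² ≤ -ν ‖Δu‖² + ν⁻¹ ‖θ‖²`, where `‖θ‖` is constant in time because a divergence-free field
transports `θ`.
-/

open MeasureTheory

/-- Partial derivative in direction `j`. -/
noncomputable def pd (j : Fin 2) (f : (Fin 2 → ℝ) → ℝ) (x : Fin 2 → ℝ) : ℝ :=
  fderiv ℝ f x (Pi.single j 1)

/-- `f` is `ℤ²`-periodic. -/
def Periodic2 (f : (Fin 2 → ℝ) → ℝ) : Prop :=
  ∀ (x : Fin 2 → ℝ) (k : Fin 2 → ℤ), f (x + fun i => (k i : ℝ)) = f x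

/-- The fundamental domain `Q = [0,1]²`. -/
def Q2 : Set (Fin 2 → ℝ) := Set.Icc 0 1

/-- Laplacian of a scalar function. -/
noncomputable def lap (f : (Fin 2 → ℝ) → ℝ) (x : Fin 2 → ℝ) : ℝ :=
  ∑ j : Fin 2, pd j (pd j f) x

/-- Standard basis vector `e₂ = (0,1)`. -/
noncomputable def e2 (i : Fin 2) : ℝ := if i = 1 then 1 else 0

open Function Set
open scoped ContDiff

section Calculus

variable {E F G : Type*} [NormedAddCommGroup E] [NormedSpace ℝ E] [NormedAddCommGroup F]
  [NormedSpace ℝ F] [NormedAddCommGroup G] [NormedSpace ℝ G]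

theorem fderiv_fderiv_apply_comm {f : E → F} (hf : ContDiff ℝ 2 f) (x v w : E) :
    fderiv ℝ (fun y => fderiv ℝ f y w) x v = fderiv ℝ (fun y => fderiv ℝ f y v) x w := by
  have hdiff : DifferentiableAt ℝ (fderiv ℝ f) x :=
    (hf.fderiv_right (m := 1) (by norm_num)).differentiable one_ne_zero x
  have hsecond (a b : E) :
      fderiv ℝ (fun y => fderiv ℝ f y b) x a = fderiv ℝ (fderiv ℝ f) x a b := by
    simp [fderiv_clm_apply hdiff (differentiableAt_const b)]
  rw [hsecond, hsecond]
  exact hf.contDiffAt.isSymmSndFDerivAt (by simp) v w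

theorem fderiv_slice_right {f : E × F → G} {x : E} {y : F} (hf : DifferentiableAt ℝ f (x, y))
    (w : F) : fderiv ℝ (fun y => f (x, y)) y w = fderiv ℝ f (x, y) (0, w) := by
  have h : HasFDerivAt (fun y => f (x, y)) _ y :=
    hf.hasFDerivAt.comp y (hasFDerivAt_prodMk_right x y)
  simp [h.fderiv]

theorem fderiv_slice_left {f : E × F → G} {x : E} {y : F} (hf : DifferentiableAt ℝ f (x, y))
    (v : E) : fderiv ℝ (fun x => f (x, y)) x v = fderiv ℝ f (x, y) (v, 0) := by
  have h : HasFDerivAt (fun x => f (x, y)) _ x :=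
    hf.hasFDerivAt.comp x (hasFDerivAt_prodMk_left (𝕜 := ℝ) x y)
  simp [h.fderiv]

theorem fderiv_fderiv_slice_comm {f : E → F → G} (hf : ContDiff ℝ 2 (uncurry f))
    (x v : E) (y w : F) :
    fderiv ℝ (fun x => fderiv ℝ (f x) y w) x v
      = fderiv ℝ (fun y => fderiv ℝ (fun x => f x y) x v) y w := by
  have hdiff : Differentiable ℝ (uncurry f) := hf.differentiable two_ne_zero
  have hdiff' (a : E × F) : Differentiable ℝ fun q => fderiv ℝ (uncurry f) q a :=
    (hf.fderiv_right (m := 1) (by norm_num)).clm_apply contDiff_const |>.differentiable one_ne_zero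
  calc fderiv ℝ (fun x => fderiv ℝ (f x) y w) x v
      = fderiv ℝ (fun x => fderiv ℝ (uncurry f) (x, y) (0, w)) x v := by
        simp only [← fderiv_slice_right (hdiff _), uncurry_apply_pair]
    _ = fderiv ℝ (fun q => fderiv ℝ (uncurry f) q (0, w)) (x, y) (v, 0) :=
        fderiv_slice_left (hdiff' _ _) v
    _ = fderiv ℝ (fun q => fderiv ℝ (uncurry f) q (v, 0)) (x, y) (0, w) :=
        fderiv_fderiv_apply_comm hf _ _ _
    _ = fderiv ℝ (fun y => fderiv ℝ (uncurry f) (x, y) (v, 0)) y w :=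
        (fderiv_slice_right (hdiff' _ _) w).symm
    _ = fderiv ℝ (fun y => fderiv ℝ (fun x => f x y) x v) y w := by
        simp only [← fderiv_slice_left (hdiff _), uncurry_apply_pair]

theorem contDiff_uncurry_deriv {f : ℝ → F → G} {m n : ℕ∞ω} (hf : ContDiff ℝ m (uncurry f))
    (hnm : n + 1 ≤ m) : ContDiff ℝ n (uncurry fun t x => deriv (fun s => f s x) t) := by
  have hswap : ContDiff ℝ m (uncurry fun (q : ℝ × F) s => f s q.2) :=
    hf.comp (contDiff_snd.prodMk (contDiff_snd.comp contDiff_fst))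
  exact hswap.fderiv_apply contDiff_fst contDiff_const hnm

theorem hasDerivAt_setIntegral_of_contDiff [MeasurableSpace F] [OpensMeasurableSpace F]
    {μ : Measure F} [IsFiniteMeasureOnCompacts μ] {K : Set F} (hK : IsCompact K)
    {f : ℝ → F → G} (hf : ContDiff ℝ 1 (uncurry f)) (t : ℝ) :
    HasDerivAt (fun s => ∫ x in K, f s x ∂μ) (∫ x in K, deriv (fun s => f s x) t ∂μ) t := by
  have hcont : Continuous (uncurry fun s x => deriv (fun s => f s x) s) :=
    (contDiff_uncurry_deriv (n := 0) hf (by norm_num)).continuous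
  have hderiv (s : ℝ) (x : F) : HasDerivAt (fun s => f s x) (deriv (fun s => f s x) s) s :=
    ((hf.comp (contDiff_prodMk_left x)).differentiable one_ne_zero s).hasDerivAt
  obtain ⟨C, hC⟩ : ∃ C, ∀ q ∈ Metric.closedBall t 1 ×ˢ K, ‖deriv (fun s => f s q.2) q.1‖ ≤ C :=
    ((isCompact_closedBall t 1).prod hK).exists_bound_of_continuousOn hcont.continuousOn
  have hmeas {g : F → G} (hg : Continuous g) : AEStronglyMeasurable g (μ.restrict K) :=
    hg.continuousOn.aestronglyMeasurable_of_isCompact hK hK.measurableSet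
  refine (hasDerivAt_integral_of_dominated_loc_of_deriv_le (bound := fun _ => C)
    (F' := fun s x => deriv (fun s => f s x) s)
    (Metric.closedBall_mem_nhds t one_pos)
    (.of_forall fun s => hmeas (hf.continuous.uncurry_left s))
    ((hf.continuous.uncurry_left t).continuousOn.integrableOn_compact hK)
    (hmeas (hcont.uncurry_left t)) ?_ (integrableOn_const hK.measure_ne_top)
    (.of_forall fun x s _ => hderiv s x)).2
  filter_upwards [ae_restrict_mem hK.measurableSet] with x hx s hs using hC (s, x) ⟨hs, hx⟩

end Calculus

/-- The partial derivative `∂ⱼ f` of a scalar function on `ℝᵈ`; `pd` is the case `d = 2`. -/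
noncomputable def partialDeriv {d : ℕ} (j : Fin d) (f : (Fin d → ℝ) → ℝ) (x : Fin d → ℝ) : ℝ :=
  fderiv ℝ f x (Pi.single j 1)

/-- The Laplacian `Δf` of a scalar function on `ℝᵈ`, as the sum of the pure second partial
derivatives; `lap` is the case `d = 2`. -/
noncomputable def laplacian {d : ℕ} (f : (Fin d → ℝ) → ℝ) (x : Fin d → ℝ) : ℝ :=
  ∑ j, partialDeriv j (partialDeriv j f) x

/-- The advection term `(u·∇)f` of a scalar function `f` by a vector field `u`, which is given by
its components. -/
noncomputable def advect {d : ℕ} (u : Fin d → (Fin d → ℝ) → ℝ) (f : (Fin d → ℝ) → ℝ)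
    (x : Fin d → ℝ) : ℝ :=
  ∑ j, u j x * partialDeriv j f x

/-- The vector field with components `u j` is divergence-free. -/
def IsDivFree {d : ℕ} (u : Fin d → (Fin d → ℝ) → ℝ) : Prop :=
  ∀ x, ∑ j, partialDeriv j (u j) x = 0

/-- Smooth `ℤᵈ`-periodic functions on `ℝᵈ`, that is, smooth functions on the torus `ℝᵈ/ℤᵈ`. -/
structure SmoothPeriodic {d : ℕ} (f : (Fin d → ℝ) → ℝ) : Prop where
  contDiff : ContDiff ℝ ∞ f
  periodic : ∀ k : Fin d → ℤ, Periodic f fun i => (k i : ℝ)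

section Torus

variable {d : ℕ} {f g : (Fin d → ℝ) → ℝ} {u : Fin d → (Fin d → ℝ) → ℝ}

namespace SmoothPeriodic

theorem differentiable (hf : SmoothPeriodic f) : Differentiable ℝ f :=
  hf.contDiff.differentiable (by simp)

theorem continuous (hf : SmoothPeriodic f) : Continuous f := hf.contDiff.continuous

theorem integrableOn (hf : SmoothPeriodic f) : IntegrableOn f (Icc 0 1) :=
  hf.continuous.integrableOn_Icc

theorem mul (hf : SmoothPeriodic f) (hg : SmoothPeriodic g) :
    SmoothPeriodic fun x => f x * g x :=
  ⟨hf.contDiff.mul hg.contDiff, fun k => (hf.periodic k).mul (hg.periodic k)⟩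

theorem sum {ι : Type*} {s : Finset ι} {f : ι → (Fin d → ℝ) → ℝ}
    (hf : ∀ i, SmoothPeriodic (f i)) : SmoothPeriodic fun x => ∑ i ∈ s, f i x :=
  ⟨ContDiff.sum fun i _ => (hf i).contDiff,
    fun k x => Finset.sum_congr rfl fun i _ => (hf i).periodic k x⟩

protected theorem partialDeriv (hf : SmoothPeriodic f) (j : Fin d) :
    SmoothPeriodic (partialDeriv j f) where
  contDiff := (hf.contDiff.fderiv_right (by simp)).clm_apply contDiff_const
  periodic k x := by
    have hshift : (fun y => f (y + fun i => (k i : ℝ))) = f := funext (hf.periodic k)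
    simp only [partialDeriv, ← fderiv_comp_add_right, hshift]

protected theorem laplacian (hf : SmoothPeriodic f) : SmoothPeriodic (laplacian f) :=
  sum fun j => (hf.partialDeriv j).partialDeriv j

protected theorem advect (hu : ∀ j, SmoothPeriodic (u j)) (hf : SmoothPeriodic f) :
    SmoothPeriodic (advect u f) :=
  sum fun j => (hu j).mul (hf.partialDeriv j)

end SmoothPeriodic

theorem partialDeriv_mul (hf : Differentiable ℝ f) (hg : Differentiable ℝ g) (j : Fin d)
    (x : Fin d → ℝ) :
    partialDeriv j (fun y => f y * g y) x
      = f x * partialDeriv j g x + partialDeriv j f x * g x := by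
  simp [partialDeriv, fderiv_fun_mul (hf x) (hg x), mul_comm]

theorem partialDeriv_sum {ι : Type*} {s : Finset ι} {f : ι → (Fin d → ℝ) → ℝ}
    (hf : ∀ i, Differentiable ℝ (f i)) (j : Fin d) (x : Fin d → ℝ) :
    partialDeriv j (fun y => ∑ i ∈ s, f i y) x = ∑ i ∈ s, partialDeriv j (f i) x := by
  simp [partialDeriv, fderiv_fun_sum fun i _ => hf i x]

theorem partialDeriv_comm (hf : ContDiff ℝ 2 f) (i j : Fin d) :
    partialDeriv i (partialDeriv j f) = partialDeriv j (partialDeriv i f) :=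
  funext fun x => fderiv_fderiv_apply_comm hf x _ _

theorem partialDeriv_laplacian (hf : SmoothPeriodic f) (i : Fin d) :
    partialDeriv i (laplacian f) = laplacian (partialDeriv i f) := by
  have hC2 {g : (Fin d → ℝ) → ℝ} (hg : SmoothPeriodic g) : ContDiff ℝ 2 g :=
    contDiff_infty.1 hg.contDiff 2
  funext x
  calc partialDeriv i (laplacian f) x
      = ∑ j, partialDeriv i (partialDeriv j (partialDeriv j f)) x :=
        partialDeriv_sum (fun j => ((hf.partialDeriv j).partialDeriv j).differentiable) i x
    _ = laplacian (partialDeriv i f) x := Finset.sum_congr rfl fun j _ => by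
        rw [partialDeriv_comm (hC2 (hf.partialDeriv j)), partialDeriv_comm (hC2 hf)]

theorem advect_mul (hf : Differentiable ℝ f) (hg : Differentiable ℝ g) (x : Fin d → ℝ) :
    advect u (fun y => f y * g y) x = f x * advect u g x + advect u f x * g x := by
  simp only [advect, partialDeriv_mul hf hg, Finset.mul_sum, Finset.sum_mul,
    ← Finset.sum_add_distrib]
  exact Finset.sum_congr rfl fun j _ => by ring

theorem partialDeriv_advect (hu : ∀ j, SmoothPeriodic (u j)) (hf : SmoothPeriodic f) (k : Fin d)
    (x : Fin d → ℝ) :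
    partialDeriv k (advect u f) x
      = advect u (partialDeriv k f) x + ∑ j, partialDeriv k (u j) x * partialDeriv j f x := by
  have hf2 : ContDiff ℝ 2 f := contDiff_infty.1 hf.contDiff 2
  calc partialDeriv k (advect u f) x
      = ∑ j, partialDeriv k (fun y => u j y * partialDeriv j f y) x :=
        partialDeriv_sum (fun j => ((hu j).mul (hf.partialDeriv j)).differentiable) k x
    _ = _ := by
        simp only [partialDeriv_mul (hu _).differentiable (hf.partialDeriv _).differentiable,
          Finset.sum_add_distrib, advect, partialDeriv_comm hf2 k]

theorem integral_divergence_eq_zero (hu : ∀ j, SmoothPeriodic (u j)) :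
    ∫ x in Icc 0 1, ∑ j, partialDeriv j (u j) x = 0 := by
  obtain _ | n := d
  · simp
  have hfaces (j : Fin (n + 1)) (y : Fin n → ℝ) :
      u j (j.insertNth 1 y) = u j (j.insertNth 0 y) := by
    rw [← (hu j).periodic (Pi.single j 1) (j.insertNth 0 y)]
    congr 1
    ext i
    induction i using j.succAboveCases <;> simp
  have hdivergence := integral_divergence_of_hasFDerivAt_off_countable' (0 : Fin (n + 1) → ℝ) 1
    zero_le_one u (fun j => fderiv ℝ (u j)) ∅ countable_empty
    (fun j => (hu j).continuous.continuousOn)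
    (fun x _ j => ((hu j).differentiable x).hasFDerivAt)
    (SmoothPeriodic.sum fun j => (hu j).partialDeriv j).integrableOn
  simpa [hfaces, partialDeriv] using hdivergence

theorem integral_sum_mul_partialDeriv (hu : ∀ j, SmoothPeriodic (u j)) (hf : SmoothPeriodic f) :
    ∫ x in Icc 0 1, ∑ j, u j x * partialDeriv j f x
      = -∫ x in Icc 0 1, (∑ j, partialDeriv j (u j) x) * f x := by
  have h := integral_divergence_eq_zero fun j => (hu j).mul hf
  simp only [partialDeriv_mul (hu _).differentiable hf.differentiable, Finset.sum_add_distrib,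
    ← Finset.sum_mul] at h
  rw [integral_add (SmoothPeriodic.sum fun j => (hu j).mul (hf.partialDeriv j)).integrableOn
    ((SmoothPeriodic.sum fun j => (hu j).partialDeriv j).mul hf).integrableOn] at h
  exact eq_neg_of_add_eq_zero_left h

theorem integral_advect_eq_zero (hu : ∀ j, SmoothPeriodic (u j)) (hdiv : IsDivFree u)
    (hf : SmoothPeriodic f) : ∫ x in Icc 0 1, advect u f x = 0 := by
  simp only [advect, integral_sum_mul_partialDeriv hu hf, hdiv _, zero_mul, integral_zero, neg_zero]

theorem integral_mul_advect_self (hu : ∀ j, SmoothPeriodic (u j)) (hdiv : IsDivFree u)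
    (hf : SmoothPeriodic f) : ∫ x in Icc 0 1, f x * advect u f x = 0 := by
  have h := integral_advect_eq_zero hu hdiv (hf.mul hf)
  simp only [advect_mul hf.differentiable hf.differentiable, mul_comm (advect u f _),
    ← two_mul, integral_const_mul] at h
  simpa using h

theorem integral_laplacian_mul (hf : SmoothPeriodic f) (hg : SmoothPeriodic g) :
    ∫ x in Icc 0 1, laplacian f x * g x
      = -∫ x in Icc 0 1, ∑ j, partialDeriv j f x * partialDeriv j g x := by
  rw [integral_sum_mul_partialDeriv hf.partialDeriv hg, neg_neg]
  rfl

theorem integral_laplacian_mul_comm (hf : SmoothPeriodic f) (hg : SmoothPeriodic g) :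
    ∫ x in Icc 0 1, laplacian f x * g x = ∫ x in Icc 0 1, f x * laplacian g x := by
  simp only [mul_comm (f _), integral_laplacian_mul hf hg, integral_laplacian_mul hg hf,
    mul_comm (partialDeriv _ f _)]

theorem integral_laplacian_mul_grad_eq_zero (hu : ∀ j, SmoothPeriodic (u j)) (hdiv : IsDivFree u)
    (hf : SmoothPeriodic f) :
    ∫ x in Icc 0 1, ∑ i, laplacian (u i) x * partialDeriv i f x = 0 := by
  calc ∫ x in Icc 0 1, ∑ i, laplacian (u i) x * partialDeriv i f x
      = ∑ i, ∫ x in Icc 0 1, laplacian (u i) x * partialDeriv i f x :=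
        integral_finsetSum _ fun i _ => ((hu i).laplacian.mul (hf.partialDeriv i)).integrableOn
    _ = ∑ i, ∫ x in Icc 0 1, u i x * partialDeriv i (laplacian f) x := by
        simp only [integral_laplacian_mul_comm (hu _) (hf.partialDeriv _),
          partialDeriv_laplacian hf]
    _ = ∫ x in Icc 0 1, advect u (laplacian f) x := (integral_finsetSum _ fun i _ =>
        ((hu i).mul (hf.laplacian.partialDeriv i)).integrableOn).symm
    _ = 0 := integral_advect_eq_zero hu hdiv hf.laplacian

theorem integral_laplacian_mul_advect (hu : ∀ j, SmoothPeriodic (u j)) (hdiv : IsDivFree u)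
    (hf : SmoothPeriodic f) :
    ∫ x in Icc 0 1, laplacian f x * advect u f x
      = -∫ x in Icc 0 1,
          ∑ k, ∑ j, partialDeriv k f x * partialDeriv k (u j) x * partialDeriv j f x := by
  have htransport (k : Fin d) : SmoothPeriodic fun x =>
      partialDeriv k f x * advect u (partialDeriv k f) x :=
    (hf.partialDeriv k).mul (.advect hu (hf.partialDeriv k))
  have hcubic : SmoothPeriodic fun x =>
      ∑ k, ∑ j, partialDeriv k f x * partialDeriv k (u j) x * partialDeriv j f x :=
    .sum fun k => .sum fun j =>
      ((hf.partialDeriv k).mul ((hu j).partialDeriv k)).mul (hf.partialDeriv j)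
  simp only [integral_laplacian_mul hf (.advect hu hf), partialDeriv_advect hu hf, mul_add,
    Finset.mul_sum, ← mul_assoc, Finset.sum_add_distrib]
  rw [integral_add (SmoothPeriodic.sum htransport).integrableOn hcubic.integrableOn,
    integral_finsetSum _ fun k _ => (htransport k).integrableOn]
  simp only [integral_mul_advect_self hu hdiv (hf.partialDeriv _), Finset.sum_const_zero, zero_add]

end Torus

section Plane

theorem sum_mul_mul_eq_zero_of_trace_eq_zero {R : Type*} [CommRing R] (A : Fin 2 → Fin 2 → R)
    (hA : ∑ j, A j j = 0) : ∑ i, ∑ k, ∑ j, A i k * A j k * A i j = 0 := by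
  simp only [Fin.sum_univ_two] at hA ⊢
  linear_combination
    (A 0 0 ^ 2 + A 1 1 ^ 2 + A 0 1 ^ 2 + A 1 0 ^ 2 + A 0 1 * A 1 0 - A 0 0 * A 1 1) * hA

variable {u v f : Fin 2 → (Fin 2 → ℝ) → ℝ} {p : (Fin 2 → ℝ) → ℝ} {ν : ℝ}

theorem integral_laplacian_mul_advect_self_eq_zero (hu : ∀ j, SmoothPeriodic (u j))
    (hdiv : IsDivFree u) :
    ∫ x in Icc 0 1, ∑ i, laplacian (u i) x * advect u (u i) x = 0 := by
  have hcubic (i : Fin 2) : SmoothPeriodic fun x => ∑ k, ∑ j,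
      partialDeriv k (u i) x * partialDeriv k (u j) x * partialDeriv j (u i) x :=
    .sum fun k => .sum fun j =>
      (((hu i).partialDeriv k).mul ((hu j).partialDeriv k)).mul ((hu i).partialDeriv j)
  rw [integral_finsetSum _ fun i _ => ((hu i).laplacian.mul (.advect hu (hu i))).integrableOn]
  simp only [integral_laplacian_mul_advect hu hdiv (hu _), Finset.sum_neg_distrib]
  rw [← integral_finsetSum _ fun i _ => (hcubic i).integrableOn]
  simp only [sum_mul_mul_eq_zero_of_trace_eq_zero (fun i j => partialDeriv j (u i) _) (hdiv _),
    integral_zero, neg_zero]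

theorem integral_laplacian_mul_of_momentum (hu : ∀ j, SmoothPeriodic (u j)) (hdiv : IsDivFree u)
    (hp : SmoothPeriodic p) (hf : ∀ i, Continuous (f i))
    (hmom : ∀ i x, v i x + advect u (u i) x
      = ν * laplacian (u i) x - partialDeriv i p x + f i x) :
    ∫ x in Icc 0 1, ∑ i, laplacian (u i) x * v i x
      = ∫ x in Icc 0 1, ∑ i, (ν * laplacian (u i) x ^ 2 + laplacian (u i) x * f i x) := by
  have hforcing : IntegrableOn
      (fun x => ∑ i, (ν * laplacian (u i) x ^ 2 + laplacian (u i) x * f i x)) (Icc 0 1) := by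
    have hL (i : Fin 2) : Continuous (laplacian (u i)) := (hu i).laplacian.continuous
    exact Continuous.integrableOn_Icc (by fun_prop)
  have hpressure : IntegrableOn
      (fun x => ∑ i, laplacian (u i) x * partialDeriv i p x) (Icc 0 1) :=
    (SmoothPeriodic.sum fun i => (hu i).laplacian.mul (hp.partialDeriv i)).integrableOn
  have hinertia : IntegrableOn (fun x => ∑ i, laplacian (u i) x * advect u (u i) x) (Icc 0 1) :=
    (SmoothPeriodic.sum fun i => (hu i).laplacian.mul (.advect hu (hu i))).integrableOn
  have hsplit (x : Fin 2 → ℝ) : ∑ i, laplacian (u i) x * v i x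
      = ∑ i, (ν * laplacian (u i) x ^ 2 + laplacian (u i) x * f i x)
        - (∑ i, laplacian (u i) x * partialDeriv i p x
          + ∑ i, laplacian (u i) x * advect u (u i) x) := by
    simp only [← Finset.sum_add_distrib, ← Finset.sum_sub_distrib]
    exact Finset.sum_congr rfl fun i _ => by linear_combination laplacian (u i) x * hmom i x
  simp only [hsplit]
  rw [integral_sub hforcing (hpressure.fun_add hinertia), integral_add hpressure hinertia,
    integral_laplacian_mul_grad_eq_zero hu hdiv hp,
    integral_laplacian_mul_advect_self_eq_zero hu hdiv, add_zero, sub_zero]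

theorem neg_two_mul_integral_laplacian_mul_le (hν : 0 < ν) (hu : ∀ j, SmoothPeriodic (u j))
    (hdiv : IsDivFree u) (hp : SmoothPeriodic p) (hf : ∀ i, Continuous (f i))
    (hmom : ∀ i x, v i x + advect u (u i) x
      = ν * laplacian (u i) x - partialDeriv i p x + f i x) :
    -2 * ∫ x in Icc 0 1, ∑ i, laplacian (u i) x * v i x
      ≤ -ν * (∫ x in Icc 0 1, ∑ i, laplacian (u i) x ^ 2)
        + ν⁻¹ * ∫ x in Icc 0 1, ∑ i, f i x ^ 2 := by
  have hL (i : Fin 2) : Continuous (laplacian (u i)) := (hu i).laplacian.continuous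
  have hyoung (a b : ℝ) : -2 * (ν * a ^ 2 + a * b) ≤ -ν * a ^ 2 + ν⁻¹ * b ^ 2 := by
    have hsq : 0 ≤ ν⁻¹ * (ν * a + b) ^ 2 := by positivity
    linear_combination hsq + (ν * a ^ 2 + 2 * a * b) * mul_inv_cancel₀ hν.ne'
  rw [integral_laplacian_mul_of_momentum hu hdiv hp hf hmom, ← integral_const_mul,
    ← integral_const_mul, ← integral_const_mul, ← integral_add
      (Continuous.integrableOn_Icc (by fun_prop)) (Continuous.integrableOn_Icc (by fun_prop))]
  refine integral_mono (Continuous.integrableOn_Icc (by fun_prop))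
    (Continuous.integrableOn_Icc (by fun_prop)) fun x => ?_
  simp only [Finset.mul_sum, ← Finset.sum_add_distrib]
  exact Finset.sum_le_sum fun i _ => hyoung _ _

end Plane

/-- Time-dependent functions on the torus `ℝᵈ/ℤᵈ` that are jointly smooth in time and space. -/
structure SmoothPeriodicFamily {d : ℕ} (f : ℝ → (Fin d → ℝ) → ℝ) : Prop where
  contDiff : ContDiff ℝ ∞ (uncurry f)
  periodic : ∀ t (k : Fin d → ℤ), Periodic (f t) fun i => (k i : ℝ)

namespace SmoothPeriodicFamily

variable {d : ℕ} {f : ℝ → (Fin d → ℝ) → ℝ}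

theorem slice (hf : SmoothPeriodicFamily f) (t : ℝ) : SmoothPeriodic (f t) :=
  ⟨hf.contDiff.comp (contDiff_prodMk_right t), hf.periodic t⟩

theorem deriv_slice (hf : SmoothPeriodicFamily f) (t : ℝ) :
    SmoothPeriodic fun x => deriv (fun s => f s x) t where
  contDiff := (contDiff_uncurry_deriv hf.contDiff (by simp)).comp (contDiff_prodMk_right t)
  periodic k x := by simp only [hf.periodic _ k x]

protected theorem partialDeriv (hf : SmoothPeriodicFamily f) (j : Fin d) :
    SmoothPeriodicFamily fun t => partialDeriv j (f t) where
  contDiff := by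
    have hparam : ContDiff ℝ ∞ (uncurry fun q : ℝ × (Fin d → ℝ) => f q.1) :=
      hf.contDiff.comp ((contDiff_fst.comp contDiff_fst).prodMk contDiff_snd)
    exact hparam.fderiv_apply contDiff_snd contDiff_const (by simp)
  periodic t := ((hf.slice t).partialDeriv j).periodic

theorem continuous_laplacian (hf : SmoothPeriodicFamily f) :
    Continuous (uncurry fun t => laplacian (f t)) :=
  continuous_finsetSum Finset.univ fun j _ =>
    ((hf.partialDeriv j).partialDeriv j).contDiff.continuous

theorem hasDerivAt_integral_sq (hf : SmoothPeriodicFamily f) (t : ℝ) :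
    HasDerivAt (fun s => ∫ x in Icc 0 1, f s x ^ 2)
      (2 * ∫ x in Icc 0 1, f t x * deriv (fun s => f s x) t) t := by
  have hsq : ContDiff ℝ 1 (uncurry fun s x => f s x ^ 2) :=
    (contDiff_infty.1 hf.contDiff 1).pow 2
  have hslice (x : Fin d → ℝ) : DifferentiableAt ℝ (fun s => f s x) t :=
    (hf.contDiff.comp (contDiff_prodMk_left x)).differentiable (by simp) t
  refine (hasDerivAt_setIntegral_of_contDiff isCompact_Icc hsq t).congr_deriv ?_
  simp only [deriv_fun_pow (hslice _), ← integral_const_mul]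
  simp [mul_assoc]

theorem deriv_partialDeriv (hf : SmoothPeriodicFamily f) (j : Fin d) (t : ℝ) (x : Fin d → ℝ) :
    deriv (fun s => partialDeriv j (f s) x) t
      = partialDeriv j (fun y => deriv (fun s => f s y) t) x :=
  fderiv_fderiv_slice_comm (contDiff_infty.1 hf.contDiff 2) t 1 x (Pi.single j 1)

theorem hasDerivAt_integral_sum_sq_partialDeriv (hf : SmoothPeriodicFamily f) (t : ℝ) :
    HasDerivAt (fun s => ∑ j, ∫ x in Icc 0 1, partialDeriv j (f s) x ^ 2)
      (-2 * ∫ x in Icc 0 1, laplacian (f t) x * deriv (fun s => f s x) t) t := by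
  have hgrad (j : Fin d) : IntegrableOn (fun x => partialDeriv j (f t) x
      * partialDeriv j (fun y => deriv (fun s => f s y) t) x) (Icc 0 1) :=
    (((hf.slice t).partialDeriv j).mul ((hf.deriv_slice t).partialDeriv j)).integrableOn
  refine (HasDerivAt.fun_sum fun j _ =>
    (hf.partialDeriv j).hasDerivAt_integral_sq t).congr_deriv ?_
  simp only [hf.deriv_partialDeriv]
  rw [integral_laplacian_mul (hf.slice t) (hf.deriv_slice t),
    integral_finsetSum _ fun j _ => hgrad j, ← Finset.mul_sum, neg_mul_neg]

end SmoothPeriodicFamily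

section Evolution

variable {d : ℕ}

theorem integral_sq_eq_of_transport {u : Fin d → ℝ → (Fin d → ℝ) → ℝ}
    {f : ℝ → (Fin d → ℝ) → ℝ} {t : ℝ} (ht : 0 ≤ t) (hu : ∀ s j, SmoothPeriodic (u j s))
    (hf : SmoothPeriodicFamily f) (hdiv : ∀ s ∈ Icc 0 t, IsDivFree fun j => u j s)
    (htransport : ∀ s ∈ Icc 0 t, ∀ x,
      deriv (fun r => f r x) s + advect (fun j => u j s) (f s) x = 0) :
    ∫ x in Icc 0 1, f t x ^ 2 = ∫ x in Icc 0 1, f 0 x ^ 2 := by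
  have hrate (s : ℝ) (hs : s ∈ Icc 0 t) :
      ∫ x in Icc 0 1, f s x * deriv (fun r => f r x) s = 0 := by
    simp only [fun x => eq_neg_of_add_eq_zero_left (htransport s hs x), mul_neg, integral_neg,
      integral_mul_advect_self (hu s) (hdiv s hs) (hf.slice s), neg_zero]
  refine constant_of_has_deriv_right_zero
    (fun s _ => (hf.hasDerivAt_integral_sq s).continuousAt.continuousWithinAt) (fun s hs => ?_)
    t ⟨ht, le_rfl⟩
  simpa [hrate s (Ico_subset_Icc_self hs)] using
    (hf.hasDerivAt_integral_sq s).hasDerivWithinAt (s := Ici s)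

/-- The enstrophy `‖∇u‖²` over the period cell. -/
noncomputable def enstrophy (u : Fin d → (Fin d → ℝ) → ℝ) : ℝ :=
  ∫ x in Icc 0 1, ∑ i, ∑ j, partialDeriv j (u i) x ^ 2

/-- The palinstrophy `‖Δu‖²` over the period cell. -/
noncomputable def palinstrophy (u : Fin d → (Fin d → ℝ) → ℝ) : ℝ :=
  ∫ x in Icc 0 1, ∑ i, laplacian (u i) x ^ 2

theorem hasDerivAt_enstrophy {u : Fin d → ℝ → (Fin d → ℝ) → ℝ}
    (hu : ∀ i, SmoothPeriodicFamily (u i)) (t : ℝ) :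
    HasDerivAt (fun s => enstrophy fun i => u i s)
      (-2 * ∫ x in Icc 0 1, ∑ i, laplacian (u i t) x * deriv (fun s => u i s x) t) t := by
  have hsq (s : ℝ) (i j : Fin d) : SmoothPeriodic fun x => partialDeriv j (u i s) x ^ 2 := by
    simpa only [sq] using
      (((hu i).slice s).partialDeriv j).mul (((hu i).slice s).partialDeriv j)
  have henstrophy (s : ℝ) : (enstrophy fun i => u i s)
      = ∑ i, ∑ j, ∫ x in Icc 0 1, partialDeriv j (u i s) x ^ 2 := by
    rw [enstrophy, integral_finsetSum _ fun i _ => (SmoothPeriodic.sum (hsq s i)).integrableOn]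
    simp only [integral_finsetSum _ fun j _ => (hsq s _ j).integrableOn]
  simp only [henstrophy]
  refine (HasDerivAt.fun_sum fun i _ =>
    (hu i).hasDerivAt_integral_sum_sq_partialDeriv t).congr_deriv ?_
  rw [integral_finsetSum _ fun i _ =>
    (((hu i).slice t).laplacian.mul ((hu i).deriv_slice t)).integrableOn, Finset.mul_sum]

theorem continuous_palinstrophy {u : Fin d → ℝ → (Fin d → ℝ) → ℝ}
    (hu : ∀ i, SmoothPeriodicFamily (u i)) : Continuous fun s => palinstrophy fun i => u i s :=
  continuous_parametric_integral_of_continuous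
    (continuous_finsetSum _ fun i _ => (hu i).continuous_laplacian.pow 2) isCompact_Icc

theorem enstrophy_add_le_of_navierStokes {u f : Fin 2 → ℝ → (Fin 2 → ℝ) → ℝ}
    {p : ℝ → (Fin 2 → ℝ) → ℝ} {ν t : ℝ} (hν : 0 < ν) (ht : 0 ≤ t)
    (hu : ∀ i, SmoothPeriodicFamily (u i)) (hp : ∀ s, SmoothPeriodic (p s))
    (hf : ∀ i, Continuous (uncurry (f i))) (hdiv : ∀ s ∈ Icc 0 t, IsDivFree fun j => u j s)
    (hmom : ∀ s ∈ Icc 0 t, ∀ i x,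
      deriv (fun r => u i r x) s + advect (fun j => u j s) (u i s) x
        = ν * laplacian (u i s) x - partialDeriv i (p s) x + f i s x) :
    (enstrophy fun i => u i t) + ν * (∫ s in 0..t, palinstrophy fun i => u i s)
      ≤ (enstrophy fun i => u i 0)
        + ν⁻¹ * ∫ s in 0..t, ∫ x in Icc 0 1, ∑ i, f i s x ^ 2 := by
  have hpal := continuous_palinstrophy hu
  have hforce : Continuous fun s => ∫ x in Icc 0 1, ∑ i, f i s x ^ 2 :=
    continuous_parametric_integral_of_continuous
      (continuous_finsetSum _ fun i _ => (hf i).pow 2) isCompact_Icc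
  have hrate (s : ℝ) (hs : s ∈ Icc 0 t) :
      -2 * (∫ x in Icc 0 1, ∑ i, laplacian (u i s) x * deriv (fun r => u i r x) s)
        ≤ -ν * (palinstrophy fun i => u i s) + ν⁻¹ * ∫ x in Icc 0 1, ∑ i, f i s x ^ 2 :=
    neg_two_mul_integral_laplacian_mul_le hν (fun i => (hu i).slice s) (hdiv s hs) (hp s)
      (fun i => (hf i).uncurry_left s) (hmom s hs)
  have hgrowth := intervalIntegral.sub_le_integral_of_hasDeriv_right_of_le ht
    (fun s _ => (hasDerivAt_enstrophy hu s).continuousAt.continuousWithinAt)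
    (fun s _ => (hasDerivAt_enstrophy hu s).hasDerivWithinAt)
    (Continuous.integrableOn_Icc (by fun_prop)) fun s hs => hrate s (Ioo_subset_Icc_self hs)
  rw [intervalIntegral.integral_add (Continuous.intervalIntegrable (by fun_prop) _ _)
      (Continuous.intervalIntegrable (by fun_prop) _ _), intervalIntegral.integral_const_mul,
    intervalIntegral.integral_const_mul] at hgrowth
  linarith

end Evolution

theorem stmt8
    (T ν : ℝ) (hT : 0 < T) (hν : 0 < ν)
    (u : ℝ → (Fin 2 → ℝ) → (Fin 2 → ℝ)) (θ p : ℝ → (Fin 2 → ℝ) → ℝ)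
    (hu : ContDiff ℝ (⊤ : ℕ∞) (fun q : ℝ × (Fin 2 → ℝ) => u q.1 q.2))
    (hθ : ContDiff ℝ (⊤ : ℕ∞) (fun q : ℝ × (Fin 2 → ℝ) => θ q.1 q.2))
    (hp : ContDiff ℝ (⊤ : ℕ∞) (fun q : ℝ × (Fin 2 → ℝ) => p q.1 q.2))
    (hup : ∀ t i, Periodic2 (fun x => u t x i))
    (hθp : ∀ t, Periodic2 (θ t)) (hpp : ∀ t, Periodic2 (p t))
    (hdiv : ∀ t x, ∑ j : Fin 2, pd j (fun y => u t y j) x = 0)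
    (hmom : ∀ t ∈ Set.Icc (0 : ℝ) T, ∀ x, ∀ i : Fin 2,
      deriv (fun s => u s x i) t + ∑ j : Fin 2, u t x j * pd j (fun y => u t y i) x
        = ν * lap (fun y => u t y i) x - pd i (p t) x + θ t x * e2 i)
    (htheta : ∀ t ∈ Set.Icc (0 : ℝ) T, ∀ x,
      deriv (fun s => θ s x) t + ∑ j : Fin 2, u t x j * pd j (θ t) x = 0) :
    ∀ t ∈ Set.Icc (0 : ℝ) T,
      (∫ x in Q2, ∑ i : Fin 2, ∑ j : Fin 2, (pd j (fun y => u t y i) x) ^ 2)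
          + ν * ∫ s in (0 : ℝ)..t,
              (∫ x in Q2, ∑ i : Fin 2, (lap (fun y => u s y i) x) ^ 2)
        ≤ (∫ x in Q2, ∑ i : Fin 2, ∑ j : Fin 2, (pd j (fun y => u 0 y i) x) ^ 2)
            + (t / ν) * ∫ x in Q2, (θ 0 x) ^ 2 := by
  intro t ht
  have hsub : Set.Icc 0 t ⊆ Set.Icc 0 T := Set.Icc_subset_Icc_right ht.2
  have hU (i : Fin 2) : SmoothPeriodicFamily fun t x => u t x i :=
    ⟨contDiff_pi.1 hu i, fun t k x => hup t i x k⟩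
  have hΘ : SmoothPeriodicFamily θ := ⟨hθ, fun t k x => hθp t x k⟩
  have hP : SmoothPeriodicFamily p := ⟨hp, fun t k x => hpp t x k⟩
  have henstrophy := enstrophy_add_le_of_navierStokes (f := fun i t x => θ t x * e2 i) hν ht.1 hU
    hP.slice (fun i => hθ.continuous.mul continuous_const) (fun s _ => hdiv s)
    fun s hs i x => hmom s (hsub hs) x i
  have hθ_conserved (s : ℝ) (hs : s ∈ Set.Icc 0 t) :
      ∫ x in Q2, θ s x ^ 2 = ∫ x in Q2, θ 0 x ^ 2 :=
    integral_sq_eq_of_transport hs.1 (fun r j => (hU j).slice r) hΘ (fun r _ => hdiv r)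
      fun r hr => htheta r (hsub ⟨hr.1, hr.2.trans hs.2⟩)
  have hforcing : ∫ s in (0 : ℝ)..t, ∫ x in Q2, ∑ i, (θ s x * e2 i) ^ 2
      = t * ∫ x in Q2, θ 0 x ^ 2 := by
    rw [intervalIntegral.integral_congr (g := fun _ => ∫ x in Q2, θ 0 x ^ 2) fun s hs => by
      simpa [e2] using hθ_conserved s (Set.uIcc_of_le ht.1 ▸ hs)]
    simp
  rw [div_eq_inv_mul, mul_assoc, ← hforcing]
  exact henstrophy
end

section
/- Let ξ : ℝ² → ℝ be a smooth ℤ²-periodic function and let v = (v¹,v²) : ℝ² → ℝ² be a smooth ℤ²-periodic divergence-free vector field (∂₁v¹ + ∂₂v² = 0). Then | ∫_Q (Δξ) v² dx | ≤ ‖∇ξ‖_{L²} ‖∂₁v‖_{L²}, where Q = [0,1]², ‖∇ξ‖_{L²}² = ∫_Q ((∂₁ξ)² + (∂₂ξ)²) dx, and ‖∂₁v‖_{L²}² = ∫_Q ((∂₁v¹)² + (∂₁v²)²) dx. (Only the horizontal derivative of v appears on the right-hand side; this is the key anisotropic estimate for the buoyancy term.) -/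
/-!
Integrating by parts on the torus and using `∂₂v² = -∂₁v¹`,
`∫ (Δξ) v² = -∫ ∂₁ξ ∂₁v² - ∫ ∂₂ξ ∂₂v² = ∫ (∂₂ξ ∂₁v¹ - ∂₁ξ ∂₁v²)`,
so incompressibility trades the vertical derivative of `v` for a horizontal one. The last integrand
is the inner product of the rotated gradient `(∂₂ξ, -∂₁ξ)`, which has the same length as `∇ξ`, with
`∂₁v`, and the Cauchy–Schwarz inequality in `L²(Q; ℝ²)` gives the bound.
-/

open MeasureTheory

section Divergence

variable {n : ℕ} {E : Type*} [NormedAddCommGroup E] [NormedSpace ℝ E]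
  {f : (Fin (n + 1) → ℝ) → E} {a b : Fin (n + 1) → ℝ}

theorem setIntegral_Icc_fderiv_single (hab : a ≤ b) (hf : Differentiable ℝ f) (j : Fin (n + 1))
    (hint : IntegrableOn (fun x => fderiv ℝ f x (Pi.single j 1)) (Set.Icc a b)) :
    ∫ x in Set.Icc a b, fderiv ℝ f x (Pi.single j 1) =
      (∫ y in Set.Icc (a ∘ j.succAbove) (b ∘ j.succAbove), f (j.insertNth (b j) y)) -
        ∫ y in Set.Icc (a ∘ j.succAbove) (b ∘ j.succAbove), f (j.insertNth (a j) y) := by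
  -- The divergence theorem for the field whose only nonzero component is the `j`-th.
  let F : Fin (n + 1) → (Fin (n + 1) → ℝ) → E := Pi.single j f
  let F' : Fin (n + 1) → (Fin (n + 1) → ℝ) → (Fin (n + 1) → ℝ) →L[ℝ] E :=
    Pi.single j (fderiv ℝ f)
  have hF (i x) : HasFDerivAt (F i) (F' i x) x := by
    obtain rfl | hij := eq_or_ne i j
    · simpa [F, F'] using (hf x).hasFDerivAt
    · simpa [F, F', hij] using hasFDerivAt_zero x
  have hdiv (x) : ∑ i, F' i x (Pi.single i 1) = fderiv ℝ f x (Pi.single j 1) := by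
    rw [Fintype.sum_eq_single j fun i hij => by simp [F', hij]]
    simp [F']
  have hflux := integral_divergence_of_hasFDerivAt_off_countable' a b hab F F' ∅
    Set.countable_empty (fun i x _ => (hF i x).continuousAt.continuousWithinAt)
    (fun x _ i => hF i x) (by simpa only [hdiv] using hint)
  rw [Fintype.sum_eq_single j fun i hij => by simp [F, hij]] at hflux
  simpa only [hdiv, F, Pi.single_eq_same] using hflux

theorem setIntegral_Icc_fderiv_single_eq_zero (hab : a ≤ b) (hf : Differentiable ℝ f)
    {j : Fin (n + 1)} (hint : IntegrableOn (fun x => fderiv ℝ f x (Pi.single j 1)) (Set.Icc a b))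
    (hp : Function.Periodic f (Pi.single j (b j - a j))) :
    ∫ x in Set.Icc a b, fderiv ℝ f x (Pi.single j 1) = 0 := by
  have hface (y : Fin n → ℝ) : f (j.insertNth (b j) y) = f (j.insertNth (a j) y) := by
    rw [← hp (j.insertNth (a j) y), ← Fin.insertNth_sub_same, add_sub_cancel]
  rw [setIntegral_Icc_fderiv_single hab hf j hint]
  simp only [hface, sub_self]

theorem setIntegral_Icc_fderiv_single_smul_eq_neg {c : (Fin (n + 1) → ℝ) → ℝ} (hab : a ≤ b)
    (hc : ContDiff ℝ 1 c) (hf : ContDiff ℝ 1 f) {j : Fin (n + 1)}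
    (hcp : Function.Periodic c (Pi.single j (b j - a j)))
    (hfp : Function.Periodic f (Pi.single j (b j - a j))) :
    ∫ x in Set.Icc a b, fderiv ℝ c x (Pi.single j 1) • f x =
      -∫ x in Set.Icc a b, c x • fderiv ℝ f x (Pi.single j 1) := by
  have hc' : Continuous fun x => fderiv ℝ c x (Pi.single j 1) :=
    (hc.continuous_fderiv one_ne_zero).clm_apply continuous_const
  have hf' : Continuous fun x => fderiv ℝ f x (Pi.single j 1) :=
    (hf.continuous_fderiv one_ne_zero).clm_apply continuous_const
  have hleibniz (x) : fderiv ℝ (c • f) x (Pi.single j 1) =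
      fderiv ℝ c x (Pi.single j 1) • f x + c x • fderiv ℝ f x (Pi.single j 1) := by
    rw [fderiv_smul (hc.differentiable one_ne_zero x) (hf.differentiable one_ne_zero x)]
    simp [add_comm]
  have hint₁ : IntegrableOn (fun x => fderiv ℝ c x (Pi.single j 1) • f x) (Set.Icc a b) :=
    (hc'.smul hf.continuous).integrableOn_Icc
  have hint₂ : IntegrableOn (fun x => c x • fderiv ℝ f x (Pi.single j 1)) (Set.Icc a b) :=
    (hc.continuous.smul hf').integrableOn_Icc
  have hmean : ∫ x in Set.Icc a b, fderiv ℝ (c • f) x (Pi.single j 1) = 0 :=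
    setIntegral_Icc_fderiv_single_eq_zero hab ((hc.smul hf).differentiable one_ne_zero)
      ((hint₁.add hint₂).congr_fun (fun x _ => (hleibniz x).symm) measurableSet_Icc)
      fun x => by simp only [Pi.smul_apply', hcp x, hfp x]
  rw [← add_eq_zero_iff_eq_neg, ← integral_add hint₁ hint₂, ← hmean]
  simp only [hleibniz]

end Divergence

section CauchySchwarz

open scoped InnerProductSpace

theorem abs_integral_inner_le_sqrt_mul_sqrt {α E : Type*} [MeasurableSpace α] {μ : Measure α}
    [NormedAddCommGroup E] [InnerProductSpace ℝ E] {f g : α → E}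
    (hf : MemLp f 2 μ) (hg : MemLp g 2 μ) :
    |∫ x, ⟪f x, g x⟫_ℝ ∂μ| ≤ √(∫ x, ‖f x‖ ^ 2 ∂μ) * √(∫ x, ‖g x‖ ^ 2 ∂μ) := by
  have inner_toLp {f g : α → E} (hf : MemLp f 2 μ) (hg : MemLp g 2 μ) :
      ⟪hf.toLp f, hg.toLp g⟫_ℝ = ∫ x, ⟪f x, g x⟫_ℝ ∂μ := by
    rw [L2.inner_def]
    refine integral_congr_ae ?_
    filter_upwards [hf.coeFn_toLp, hg.coeFn_toLp] with x hfx hgx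
    rw [hfx, hgx]
  have norm_toLp {f : α → E} (hf : MemLp f 2 μ) : ‖hf.toLp f‖ = √(∫ x, ‖f x‖ ^ 2 ∂μ) := by
    simp only [norm_eq_sqrt_real_inner (hf.toLp f), inner_toLp, real_inner_self_eq_norm_sq]
  rw [← inner_toLp hf hg, ← norm_toLp hf, ← norm_toLp hg]
  exact abs_real_inner_le_norm _ _

theorem abs_integral_mul_sub_mul_le {α : Type*} [MeasurableSpace α] {μ : Measure α}
    {a b c d : α → ℝ} (ha : MemLp a 2 μ) (hb : MemLp b 2 μ) (hc : MemLp c 2 μ) (hd : MemLp d 2 μ) :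
    |∫ x, (b x * c x - a x * d x) ∂μ| ≤
      √(∫ x, (a x ^ 2 + b x ^ 2) ∂μ) * √(∫ x, (c x ^ 2 + d x ^ 2) ∂μ) := by
  have hba : MemLp (fun x => !₂[b x, -a x]) 2 μ :=
    .of_eval_piLp (Fin.forall_fin_two.2 ⟨hb, ha.neg⟩)
  have hcd : MemLp (fun x => !₂[c x, d x]) 2 μ := .of_eval_piLp (Fin.forall_fin_two.2 ⟨hc, hd⟩)
  simpa [EuclideanSpace.norm_sq_eq, PiLp.inner_apply, Fin.sum_univ_two, mul_comm, add_comm,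
    sub_eq_add_neg] using abs_integral_inner_le_sqrt_mul_sqrt hba hcd

end CauchySchwarz

theorem memLp_restrict_of_continuousOn_isCompact {X E : Type*} [TopologicalSpace X] [T2Space X]
    [MeasurableSpace X] [OpensMeasurableSpace X] {μ : Measure X} [IsFiniteMeasureOnCompacts μ]
    [NormedAddCommGroup E] {f : X → E} {K : Set X} (hf : ContinuousOn f K) (hK : IsCompact K)
    (p : ENNReal) : MemLp f p (μ.restrict K) := by
  obtain ⟨C, hC⟩ := hK.exists_bound_of_continuousOn hf
  have : IsFiniteMeasure (μ.restrict K) := isFiniteMeasure_restrict.2 hK.measure_lt_top.ne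
  exact .of_bound (hf.aestronglyMeasurable_of_isCompact hK hK.measurableSet) C
    (ae_restrict_of_forall_mem hK.measurableSet hC)

theorem Periodic2.periodic_single {f : (Fin 2 → ℝ) → ℝ} (hf : Periodic2 f) (j : Fin 2) :
    Function.Periodic f (Pi.single j 1) := fun x => by
  have hcast : (fun i => ((Pi.single j 1 : Fin 2 → ℤ) i : ℝ)) = Pi.single j 1 := by
    ext i
    simp [Pi.single_apply]
  rw [← hcast, hf]

theorem Periodic2.pd {f : (Fin 2 → ℝ) → ℝ} (hf : Periodic2 f) (j : Fin 2) :
    Periodic2 (pd j f) := fun x k => by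
  simp only [_root_.pd, ← fderiv_comp_add_right, hf _ k]

theorem contDiff_pd {f : (Fin 2 → ℝ) → ℝ} {m n : WithTop ℕ∞} (hf : ContDiff ℝ n f)
    (hmn : m + 1 ≤ n) (j : Fin 2) : ContDiff ℝ m (pd j f) :=
  (hf.fderiv_right hmn).clm_apply contDiff_const

theorem continuous_pd {f : (Fin 2 → ℝ) → ℝ} (hf : ContDiff ℝ 1 f) (j : Fin 2) :
    Continuous (pd j f) :=
  (contDiff_pd hf (zero_add 1).le j).continuous

theorem setIntegral_Q2_laplacian_mul_eq {ξ u w : (Fin 2 → ℝ) → ℝ} (hξ : ContDiff ℝ 2 ξ)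
    (hu : ContDiff ℝ 1 u) (hw : ContDiff ℝ 1 w) (hξp : ∀ j, Periodic2 (pd j ξ)) (hwp : Periodic2 w)
    (hdiv : ∀ x, pd 0 u x + pd 1 w x = 0) :
    ∫ x in Q2, (pd 0 (pd 0 ξ) x + pd 1 (pd 1 ξ) x) * w x =
      ∫ x in Q2, (pd 1 ξ x * pd 0 u x - pd 0 ξ x * pd 0 w x) := by
  have hξ' (j) : ContDiff ℝ 1 (pd j ξ) := contDiff_pd hξ one_add_one_eq_two.le j
  have hparts (j) : ∫ x in Q2, pd j (pd j ξ) x * w x = -∫ x in Q2, pd j ξ x * pd j w x :=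
    setIntegral_Icc_fderiv_single_smul_eq_neg zero_le_one (hξ' j) hw
      (by simpa using (hξp j).periodic_single j) (by simpa using hwp.periodic_single j)
  have hdiv' (x) : pd 1 w x = -pd 0 u x := eq_neg_of_add_eq_zero_right (hdiv x)
  have hint_left (j) : IntegrableOn (fun x => pd j (pd j ξ) x * w x) Q2 :=
    ((continuous_pd (hξ' j) j).mul hw.continuous).integrableOn_Icc
  have hint_right (i : Fin 2) {f : (Fin 2 → ℝ) → ℝ} (hf : ContDiff ℝ 1 f) :
      IntegrableOn (fun x => pd i ξ x * pd 0 f x) Q2 :=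
    ((hξ' i).continuous.mul (continuous_pd hf 0)).integrableOn_Icc
  calc ∫ x in Q2, (pd 0 (pd 0 ξ) x + pd 1 (pd 1 ξ) x) * w x
      = (∫ x in Q2, pd 0 (pd 0 ξ) x * w x) + ∫ x in Q2, pd 1 (pd 1 ξ) x * w x := by
        simp only [add_mul]
        exact integral_add (hint_left 0) (hint_left 1)
    _ = (∫ x in Q2, pd 1 ξ x * pd 0 u x) - ∫ x in Q2, pd 0 ξ x * pd 0 w x := by
        simp only [hparts, hdiv', mul_neg, integral_neg]
        ring
    _ = _ := (integral_sub (hint_right 1 hu) (hint_right 0 hw)).symm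

theorem stmt13_general {ξ : (Fin 2 → ℝ) → ℝ} {v : (Fin 2 → ℝ) → (Fin 2 → ℝ)}
    (hξ : ContDiff ℝ 2 ξ) (hv : ContDiff ℝ 1 v)
    (hξp : ∀ j, Periodic2 (pd j ξ)) (hvp : Periodic2 (fun x => v x 1))
    (hdiv : ∀ x, pd 0 (fun y => v y 0) x + pd 1 (fun y => v y 1) x = 0) :
    |∫ x in Q2, (pd 0 (pd 0 ξ) x + pd 1 (pd 1 ξ) x) * v x 1|
      ≤ √(∫ x in Q2, (pd 0 ξ x ^ 2 + pd 1 ξ x ^ 2))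
        * √(∫ x in Q2, (pd 0 (fun y => v y 0) x ^ 2 + pd 0 (fun y => v y 1) x ^ 2)) := by
  have hvi (i) : ContDiff ℝ 1 (fun x => v x i) := contDiff_pi.1 hv i
  have hmem {f : (Fin 2 → ℝ) → ℝ} (hf : ContDiff ℝ 1 f) (j) :
      MemLp (pd j f) 2 (volume.restrict Q2) :=
    memLp_restrict_of_continuousOn_isCompact (continuous_pd hf j).continuousOn isCompact_Icc 2
  have hξ₁ : ContDiff ℝ 1 ξ := hξ.of_le one_le_two
  rw [setIntegral_Q2_laplacian_mul_eq hξ (hvi 0) (hvi 1) hξp hvp hdiv]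
  exact abs_integral_mul_sub_mul_le (hmem hξ₁ 0) (hmem hξ₁ 1) (hmem (hvi 0) 0) (hmem (hvi 1) 0)

theorem stmt13
    (ξ : (Fin 2 → ℝ) → ℝ) (v : (Fin 2 → ℝ) → (Fin 2 → ℝ))
    (hξ : ContDiff ℝ (⊤ : ℕ∞) ξ) (hv : ContDiff ℝ (⊤ : ℕ∞) v)
    (hξp : Periodic2 ξ) (hvp : ∀ i, Periodic2 (fun x => v x i))
    (hdiv : ∀ x, pd 0 (fun y => v y 0) x + pd 1 (fun y => v y 1) x = 0) :
    |∫ x in Q2, (pd 0 (pd 0 ξ) x + pd 1 (pd 1 ξ) x) * v x 1|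
      ≤ Real.sqrt (∫ x in Q2, ((pd 0 ξ x) ^ 2 + (pd 1 ξ x) ^ 2))
        * Real.sqrt (∫ x in Q2, ((pd 0 (fun y => v y 0) x) ^ 2
            + (pd 0 (fun y => v y 1) x) ^ 2)) :=
  stmt13_general (contDiff_infty.1 hξ 2) (contDiff_infty.1 hv 1) hξp.pd (hvp 1) hdiv
end
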